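/- arXiv:1801.08461 — 5 statements merged into one kernel-verified Lean document; each statement's English description precedes it below -/
import Mathlib

section
/- Let φ be a flow on a metric space (Λ, dist) and suppose x ∉ fix(φ), u : ℝ → ℝ is a function, h ∈ H⁺(ℝ), sup_{t ∈ ℝ} diam(φ_{[t,u(t)]}(x)) < diam(φ_ℝ(x))/2, and φ_{h(t)}(x) ∈ φ_{[t,u(t)]}(x) for all t ∈ ℝ. Then there is g ∈ H⁺(ℝ) such that g(t) ∈ [t, u(t)] for all t ∈ ℝ and φ_{g(t)}(x) = φ_{h(t)}(x) for all t ∈ ℝ. -/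
open Metric Set Function

noncomputable section

/-- The set of increasing homeomorphisms of `ℝ`, viewed as continuous strictly
increasing surjections `ℝ → ℝ`. -/
def IsHplus (h : ℝ → ℝ) : Prop :=
  Continuous h ∧ StrictMono h ∧ Function.Surjective h

/-- Increasing homeomorphisms of `ℝ` fixing `0`. -/
def IsHplus0 (h : ℝ → ℝ) : Prop := IsHplus h ∧ h 0 = 0

/-- The orbit `φ_ℝ(x)` of a point under a flow. -/
def orb {α : Type*} (φ : ℝ → α → α) (x : α) : Set α := Set.range fun t => φ t x

/-- The orbit segment `φ_{[a,b]}(x)` (where `[a,b]` is the closed interval between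
`a` and `b`, also when `a > b`). -/
def arc {α : Type*} (φ : ℝ → α → α) (x : α) (a b : ℝ) : Set α :=
  (fun t => φ t x) '' Set.uIcc a b

/-- A (global) flow on a topological space: a continuous map `φ : ℝ × Λ → Λ` with
`φ_0 = id` and `φ_{s+t} = φ_s ∘ φ_t`. -/
def IsFlow {α : Type*} [TopologicalSpace α] (φ : ℝ → α → α) : Prop :=
  Continuous (fun p : ℝ × α => φ p.1 p.2) ∧ (∀ x, φ 0 x = x) ∧
    ∀ s t : ℝ, ∀ x, φ (s + t) x = φ s (φ t x)

/-- The set of fixed points of a flow. -/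
def fixSet {α : Type*} (φ : ℝ → α → α) : Set α := {σ | ∀ t : ℝ, φ t σ = σ}

/-! Since `φ_{h(t)}(x)` lies on the arc from `t` to `u(t)`, choose `k(t) ∈ [t, u(t)]` with
`φ_{k(t)}(x) = φ_{h(t)}(x)`; no continuity of `k` is assumed, but `k(t) - h(t)` is a period of the
orbit. For `t'` near `t`, the times `k(t')` and `h(t') + (k(t) - h(t))` differ by a period, and the
orbit stays within less than half of its diameter from `φ_{t'}(x)` all the way from `t'` to either
of them. If they were distinct, these two segments would cover a full period, so the orbit would
lie in a ball too small for its diameter. Hence `k - h` is locally constant, and `k` is a translate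
of `h`. -/

theorem diam_lt_of_isCompact_of_subset_ball {α : Type*} [PseudoMetricSpace α] {s : Set α} {x : α}
    {r : ℝ} (hs : IsCompact s) (hne : s.Nonempty) (hsr : s ⊆ ball x r) : diam s < 2 * r := by
  obtain ⟨y, hy, hmax⟩ := hs.exists_isMaxOn hne (f := fun z => dist z x) (by fun_prop)
  calc
    diam s ≤ 2 * dist y x := diam_le_of_subset_closedBall dist_nonneg hmax
    _ < 2 * r := by gcongr; exact hsr hy

theorem isOpen_setOf_forall_mem_segment {X E : Type*} [TopologicalSpace X] [AddCommGroup E]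
    [Module ℝ E] [TopologicalSpace E] [IsTopologicalAddGroup E] [ContinuousSMul ℝ E]
    {a b : X → E} (ha : Continuous a) (hb : Continuous b) {U : Set (X × E)} (hU : IsOpen U) :
    IsOpen {x | ∀ y ∈ segment ℝ (a x) (b x), (x, y) ∈ U} := by
  simp only [segment_eq_image', forall_mem_image]
  refine isOpen_iff_eventually.2 fun x hx =>
    isCompact_Icc.eventually_forall_of_forall_eventually fun l hl => ?_
  have hcont : Continuous fun p : X × ℝ => (p.1, a p.1 + p.2 • (b p.1 - a p.1)) := by fun_prop
  exact hcont.continuousAt.eventually_mem (hU.mem_nhds (hx hl))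

theorem range_eq_union_image_uIcc_of_periodic {𝕜 α : Type*} [AddCommGroup 𝕜] [LinearOrder 𝕜]
    [IsOrderedAddMonoid 𝕜] [Archimedean 𝕜] {f : 𝕜 → α} {a b : 𝕜} (hf : Periodic f (b - a))
    (hab : a ≠ b) (t : 𝕜) : range f = f '' uIcc t a ∪ f '' uIcc t b := by
  refine subset_antisymm ?_ (union_subset (image_subset_range _ _) (image_subset_range _ _))
  have hperiod : f '' uIcc a b = range f := by
    simpa only [add_sub_cancel] using hf.image_uIcc (sub_ne_zero.2 hab.symm) a
  rw [← hperiod, ← image_union, uIcc_comm t a]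
  exact image_mono uIcc_subset_uIcc_union_uIcc

section Curve

variable {α : Type*} [PseudoMetricSpace α] {f : ℝ → α}

theorem isOpen_setOf_mapsTo_uIcc_ball (hf : Continuous f) {k : ℝ → ℝ} (hk : Continuous k) (r : ℝ) :
    IsOpen {t | MapsTo f (uIcc t (k t)) (ball (f t) r)} := by
  have hU : IsOpen {p : ℝ × ℝ | dist (f p.2) (f p.1) < r} :=
    isOpen_lt (by fun_prop) continuous_const
  have hopen := isOpen_setOf_forall_mem_segment continuous_id hk hU
  simp only [segment_eq_uIcc] at hopen
  exact hopen

theorem eq_of_periodic_sub_of_mapsTo_ball (hf : Continuous f) {t a b : ℝ}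
    (hper : Periodic f (b - a))
    (ha : MapsTo f (uIcc t a) (ball (f t) (diam (range f) / 2)))
    (hb : MapsTo f (uIcc t b) (ball (f t) (diam (range f) / 2))) : a = b := by
  by_contra hab
  have hrange := range_eq_union_image_uIcc_of_periodic hper hab t
  have hcompact : IsCompact (range f) := by
    rw [hrange]
    exact (isCompact_uIcc.image hf).union (isCompact_uIcc.image hf)
  have hball : range f ⊆ ball (f t) (diam (range f) / 2) :=
    hrange.subset.trans (union_subset ha.image_subset hb.image_subset)
  linarith [diam_lt_of_isCompact_of_subset_ball hcompact (range_nonempty f) hball]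

theorem isLocallyConstant_sub_of_periodic (hf : Continuous f) {h k : ℝ → ℝ} (hh : Continuous h)
    (hper : ∀ t, Periodic f (k t - h t))
    (hball : ∀ t, MapsTo f (uIcc t (k t)) (ball (f t) (diam (range f) / 2))) :
    IsLocallyConstant fun t => k t - h t := by
  refine (IsLocallyConstant.iff_eventually_eq _).2 fun t => ?_
  have hopen := isOpen_setOf_mapsTo_uIcc_ball hf (hh.add_const (k t - h t)) (diam (range f) / 2)
  have ht : MapsTo f (uIcc t (h t + (k t - h t))) (ball (f t) (diam (range f) / 2)) := by
    simpa only [add_sub_cancel] using hball t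
  filter_upwards [hopen.mem_nhds ht] with t' ht'
  have hper' : Periodic f (h t' + (k t - h t) - k t') := by
    have hshift : h t' + (k t - h t) - k t' = k t - h t - (k t' - h t') := by ring
    exact hshift ▸ (hper t).sub_period (hper t')
  exact sub_eq_iff_eq_add'.2 (eq_of_periodic_sub_of_mapsTo_ball hf hper' (hball t') ht')

end Curve

theorem IsHplus.add_const {h : ℝ → ℝ} (hh : IsHplus h) (c : ℝ) : IsHplus fun t => h t + c :=
  ⟨hh.1.add_const c, hh.2.1.add_const c, (add_right_surjective c).comp hh.2.2⟩

theorem IsFlow.continuous_orbit {α : Type*} [TopologicalSpace α] {φ : ℝ → α → α} (hφ : IsFlow φ)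
    (x : α) : Continuous fun t => φ t x :=
  hφ.1.comp (Continuous.prodMk_left x)

theorem IsFlow.periodic_of_eq {α : Type*} [TopologicalSpace α] {φ : ℝ → α → α} (hφ : IsFlow φ)
    {x : α} {a b : ℝ} (hab : φ a x = φ b x) : Periodic (fun t => φ t x) (a - b) := fun t =>
  calc
    φ (t + (a - b)) x = φ (t - b + a) x := by ring_nf
    _ = φ (t - b) (φ b x) := by rw [hφ.2.2, hab]
    _ = φ t x := by rw [← hφ.2.2, sub_add_cancel]

section Arc

variable {α : Type*} [PseudoMetricSpace α] {φ : ℝ → α → α} {x : α}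

theorem mapsTo_ball_of_diam_arc_lt (hcont : Continuous fun t => φ t x) {a b r : ℝ}
    (hr : diam (arc φ x a b) < r) : MapsTo (fun t => φ t x) (uIcc a b) (ball (φ a x) r) := by
  have hbdd : Bornology.IsBounded (arc φ x a b) := (isCompact_uIcc.image hcont).isBounded
  intro s hs
  exact (dist_le_diam_of_mem hbdd (mem_image_of_mem _ hs)
    (mem_image_of_mem _ left_mem_uIcc)).trans_lt hr

theorem diam_arc_lt_of_iSup_lt {ι : Sort*} {a b : ι → ℝ}
    (hsup : ⨆ i, diam (arc φ x (a i) (b i)) < diam (orb φ x) / 2) (i : ι) :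
    diam (arc φ x (a i) (b i)) < diam (orb φ x) / 2 := by
  have hbdd : Bornology.IsBounded (orb φ x) := by
    by_contra hunbdd
    have hnonneg : 0 ≤ ⨆ i, diam (arc φ x (a i) (b i)) := Real.iSup_nonneg fun _ => diam_nonneg
    linarith [diam_eq_zero_of_unbounded hunbdd]
  have hbddAbove : BddAbove (range fun i => diam (arc φ x (a i) (b i))) :=
    ⟨diam (orb φ x), forall_mem_range.2 fun _ => diam_mono (image_subset_range _ _) hbdd⟩
  exact (le_ciSup hbddAbove i).trans_lt hsup

end Arc

theorem exists_increasing_reparam_general {Λ : Type*} [PseudoMetricSpace Λ] {φ : ℝ → Λ → Λ}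
    (hφ : IsFlow φ) {x : Λ} {u h : ℝ → ℝ} (hh : Continuous h)
    (hdiam : ∀ t, diam (arc φ x t (u t)) < diam (orb φ x) / 2)
    (hmem : ∀ t, φ (h t) x ∈ arc φ x t (u t)) :
    ∃ c, Periodic (fun t => φ t x) c ∧ ∀ t, h t + c ∈ uIcc t (u t) := by
  have hcont := hφ.continuous_orbit x
  choose k hk hkh using hmem
  have hper : ∀ t, Periodic (fun t => φ t x) (k t - h t) := fun t => hφ.periodic_of_eq (hkh t)
  have hball : ∀ t, MapsTo (fun t => φ t x) (uIcc t (k t)) (ball (φ t x) (diam (orb φ x) / 2)) :=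
    fun t => (mapsTo_ball_of_diam_arc_lt hcont (hdiam t)).mono_left
      (uIcc_subset_uIcc_left (hk t))
  obtain ⟨c, hc⟩ := (isLocallyConstant_sub_of_periodic hcont hh hper hball).exists_eq_const
  have hc' : ∀ t, k t - h t = c := congrFun hc
  exact ⟨c, hc' 0 ▸ hper 0, fun t => sub_eq_iff_eq_add'.1 (hc' t) ▸ hk t⟩

/-- Let `φ` be a flow on a metric space, `x ∉ fix(φ)`,
`u : ℝ → ℝ` a function and `h ∈ H⁺(ℝ)` with
`sup_t diam (φ_{[t, u t]} x) < diam (φ_ℝ(x)) / 2` and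
`φ_{h t} x ∈ φ_{[t, u t]} x` for all `t`. Then there is `g ∈ H⁺(ℝ)` such that
`g t ∈ [t, u t]` and `φ_{g t} x = φ_{h t} x` for all `t`. -/
theorem exists_increasing_reparam
    {Λ : Type*} [MetricSpace Λ] (φ : ℝ → Λ → Λ) (hφ : IsFlow φ)
    (x : Λ) (hx : x ∉ fixSet φ) (u : ℝ → ℝ) (h : ℝ → ℝ) (hh : IsHplus h)
    (hsup : (⨆ t : ℝ, Metric.diam (arc φ x t (u t))) < Metric.diam (orb φ x) / 2)
    (hmem : ∀ t : ℝ, φ (h t) x ∈ arc φ x t (u t)) :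
    ∃ g : ℝ → ℝ, IsHplus g ∧ (∀ t : ℝ, g t ∈ Set.uIcc t (u t)) ∧
      ∀ t : ℝ, φ (g t) x = φ (h t) x := by
  obtain ⟨c, hper, hc⟩ :=
    exists_increasing_reparam_general hφ hh.1 (diam_arc_lt_of_iSup_lt hsup) hmem
  exact ⟨fun t => h t + c, hh.add_const c, hc, fun t => hper (h t)⟩
end
end

section
/- Let γ : [a,b] → ℝ^d be a C² curve with ‖γ'(t)‖ = 1 for all t ∈ [a,b]. If a < s < b and dist(γ(a), γ(s)) = sup_{a ≤ t ≤ b} dist(γ(a), γ(t)), then ‖γ''(s)‖ ≥ 1/dist(γ(a), γ(s)). -/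
open Metric Set

noncomputable section

abbrev Euc (d : ℕ) := EuclideanSpace ℝ (Fin d)

/-!
The function `t ↦ ‖γ t - p‖ ^ 2` has second derivative `2 * (‖γ' t‖ ^ 2 + ⟪γ t - p, γ'' t⟫)`, which
is nonpositive at a local maximum `s`. Hence `‖γ' s‖ ^ 2 ≤ -⟪γ s - p, γ'' s⟫`, and the
Cauchy–Schwarz inequality bounds the right-hand side by `‖γ'' s‖ * dist p (γ s)`.
-/

open Filter Topology
open scoped RealInnerProductSpace

theorem deriv_deriv_nonpos_of_isLocalMax {f : ℝ → ℝ} {x : ℝ} (hmax : IsLocalMax f x)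
    (hf : ContinuousAt f x) : deriv (deriv f) x ≤ 0 := by
  by_contra! hpos
  -- By the second derivative test `x` is also a local minimum, so `f` is locally constant.
  have hmin : IsLocalMin f x := isLocalMin_of_deriv_deriv_pos hpos hmax.deriv_eq_zero hf
  have hconst : f =ᶠ[𝓝 x] fun _ => f x := by
    filter_upwards [hmax, hmin] with t hle hge using le_antisymm hle hge
  have hzero : deriv (deriv f) x = 0 := by simp [hconst.deriv.deriv_eq]
  exact hpos.ne' hzero

theorem second_deriv_nonpos_of_isLocalMax {f f' : ℝ → ℝ} {f'' x : ℝ} (hmax : IsLocalMax f x)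
    (hf : ∀ᶠ t in 𝓝 x, HasDerivAt f (f' t) t) (hf' : HasDerivAt f' f'' x) : f'' ≤ 0 := by
  have hderiv : deriv f =ᶠ[𝓝 x] f' := hf.mono fun _ ht => ht.deriv
  rw [← hf'.deriv, ← hderiv.deriv_eq]
  exact deriv_deriv_nonpos_of_isLocalMax hmax hf.self_of_nhds.continuousAt

section InnerProductSpace

variable {E : Type*} [NormedAddCommGroup E] [InnerProductSpace ℝ E]
  {γ γ' : ℝ → E} {γ'' p : E} {s : ℝ}

theorem norm_sq_add_inner_nonpos_of_isLocalMax_dist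
    (hmax : IsLocalMax (fun t => dist p (γ t)) s)
    (hγ : ∀ᶠ t in 𝓝 s, HasDerivAt γ (γ' t) t) (hγ' : HasDerivAt γ' γ'' s) :
    ‖γ' s‖ ^ 2 + ⟪γ s - p, γ''⟫ ≤ 0 := by
  have hmax_sq : IsLocalMax (fun t => ‖γ t - p‖ ^ 2) s := by
    filter_upwards [hmax] with t ht
    rw [dist_eq_norm', dist_eq_norm'] at ht
    gcongr
  have hfirst : ∀ᶠ t in 𝓝 s,
      HasDerivAt (fun u => ‖γ u - p‖ ^ 2) (2 * ⟪γ t - p, γ' t⟫) t :=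
    hγ.mono fun _ ht => (ht.sub_const p).norm_sq
  have hsecond : HasDerivAt (fun t => 2 * ⟪γ t - p, γ' t⟫)
      (2 * (⟪γ s - p, γ''⟫ + ⟪γ' s, γ' s⟫)) s :=
    ((hγ.self_of_nhds.sub_const p).inner ℝ hγ').const_mul 2
  have hnonpos := second_deriv_nonpos_of_isLocalMax hmax_sq hfirst hsecond
  rw [real_inner_self_eq_norm_sq] at hnonpos
  linarith

theorem norm_deriv_sq_le_norm_mul_dist_of_isLocalMax_dist
    (hmax : IsLocalMax (fun t => dist p (γ t)) s)
    (hγ : ∀ᶠ t in 𝓝 s, HasDerivAt γ (γ' t) t) (hγ' : HasDerivAt γ' γ'' s) :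
    ‖γ' s‖ ^ 2 ≤ ‖γ''‖ * dist p (γ s) :=
  calc
    ‖γ' s‖ ^ 2 ≤ -⟪γ s - p, γ''⟫ := by
      linarith [norm_sq_add_inner_nonpos_of_isLocalMax_dist hmax hγ hγ']
    _ ≤ |⟪γ s - p, γ''⟫| := neg_le_abs _
    _ ≤ ‖γ s - p‖ * ‖γ''‖ := abs_real_inner_le_norm _ _
    _ = ‖γ''‖ * dist p (γ s) := by rw [dist_eq_norm', mul_comm]

theorem norm_second_deriv_ge_of_max_dist_general
    (hmax : IsLocalMax (fun t => dist p (γ t)) s)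
    (hγ : ∀ᶠ t in 𝓝 s, HasDerivAt γ (γ' t) t) (hγ' : HasDerivAt γ' γ'' s)
    (hunit : ‖γ' s‖ = 1) :
    1 / dist p (γ s) ≤ ‖γ''‖ := by
  have hbound := norm_deriv_sq_le_norm_mul_dist_of_isLocalMax_dist hmax hγ hγ'
  rw [hunit, one_pow] at hbound
  exact div_le_of_le_mul₀ dist_nonneg (norm_nonneg _) hbound

end InnerProductSpace

/-- Let `γ : [a,b] → ℝ^d` be a C² curve with unit speed. If
`a < s < b` and `dist (γ a) (γ s) = sup_{a ≤ t ≤ b} dist (γ a) (γ t)`, then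
`‖γ'' s‖ ≥ 1 / dist (γ a) (γ s)`. -/
theorem norm_second_deriv_ge_of_max_dist {d : ℕ}
    (γ γ' γ'' : ℝ → Euc d) (a b s : ℝ)
    (hd1 : ∀ t ∈ Set.Icc a b, HasDerivWithinAt γ (γ' t) (Set.Icc a b) t)
    (hd2 : ∀ t ∈ Set.Icc a b, HasDerivWithinAt γ' (γ'' t) (Set.Icc a b) t)
    (hcont : ContinuousOn γ'' (Set.Icc a b))
    (hunit : ∀ t ∈ Set.Icc a b, ‖γ' t‖ = 1)
    (has : a < s) (hsb : s < b)
    (hmax : ∀ t ∈ Set.Icc a b, dist (γ a) (γ t) ≤ dist (γ a) (γ s)) :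
    1 / dist (γ a) (γ s) ≤ ‖γ'' s‖ := by
  have hIcc : ∀ᶠ t in 𝓝 s, Icc a b ∈ 𝓝 t := eventually_mem_nhds_iff.2 (Icc_mem_nhds has hsb)
  exact norm_second_deriv_ge_of_max_dist_general (eventually_of_mem hIcc.self_of_nhds hmax)
    (hIcc.mono fun t ht => (hd1 t (mem_of_mem_nhds ht)).hasDerivAt ht)
    ((hd2 s ⟨has.le, hsb.le⟩).hasDerivAt hIcc.self_of_nhds) (hunit s ⟨has.le, hsb.le⟩)
end
end

section
/- Let γ : [a,b] → ℝ^d be a C² curve with ‖γ'(t)‖ = 1 for all t ∈ [a,b]. If R > 0, ‖γ''(t)‖ ≤ 1/R for all t ∈ [a,b], and diam(γ([a,b])) < R, then diam(γ([a,b])) = dist(γ(a), γ(b)). -/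
/-!
Fix a point `p` of the curve. The second derivative of `t ↦ ‖γ t - p‖ ^ 2` is
`2 * (⟪γ t - p, γ'' t⟫ + ‖γ' t‖ ^ 2)`, which is nonnegative by Cauchy–Schwarz as soon as
`‖γ t - p‖ * ‖γ'' t‖ ≤ ‖γ' t‖ ^ 2`; at unit speed this says that `γ t` and `p` are no farther apart
than the radius of curvature. So the squared distance to `p` is convex along the curve and attains
its maximum at an endpoint. Using this first for an arbitrary `p` and then for `p` an endpoint
shows that no two points of the curve are farther apart than its endpoints.
-/

open Metric Set

noncomputable section

theorem diam_eq_dist_of_forall_dist_le_max {α : Type*} [PseudoMetricSpace α] {S : Set α} {x y : α}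
    (hx : x ∈ S) (hy : y ∈ S) (h : ∀ p ∈ S, ∀ q ∈ S, dist q p ≤ max (dist x p) (dist y p)) :
    diam S = dist x y := by
  have hx_le : ∀ p ∈ S, dist x p ≤ dist x y := fun p hp => by
    simpa [dist_comm] using h x hx p hp
  have hy_le : ∀ p ∈ S, dist y p ≤ dist x y := fun p hp => by
    simpa [dist_comm] using h y hy p hp
  have hle : ∀ p ∈ S, ∀ q ∈ S, dist p q ≤ dist x y := fun p hp q hq =>
    (h q hq p hp).trans (max_le (hx_le q hq) (hy_le q hq))
  have hbdd : Bornology.IsBounded S := isBounded_iff.2 ⟨dist x y, fun _ hp _ hq => hle _ hp _ hq⟩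
  exact le_antisymm (diam_le_of_forall_dist_le dist_nonneg hle) (dist_le_diam_of_mem hbdd hx hy)

theorem dist_le_max_of_convexOn_dist_sq {α : Type*} [PseudoMetricSpace α] {γ : ℝ → α} {p : α}
    {a b t : ℝ} (hconv : ConvexOn ℝ (Icc a b) (fun t => dist (γ t) p ^ 2)) (ht : t ∈ Icc a b) :
    dist (γ t) p ≤ max (dist (γ a) p) (dist (γ b) p) := by
  have hab : a ≤ b := ht.1.trans ht.2
  simpa only [le_max_iff, sq_le_sq₀ dist_nonneg dist_nonneg] using
    hconv.le_max_of_mem_Icc (left_mem_Icc.2 hab) (right_mem_Icc.2 hab) ht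

section InnerProductSpace

variable {E : Type*} [NormedAddCommGroup E] [InnerProductSpace ℝ E] {γ γ' γ'' : ℝ → E}

theorem convexOn_dist_sq_of_inner_add_nonneg {D : Set ℝ} {p : E} (hD : Convex ℝ D)
    (hγ : ContinuousOn γ D)
    (hγ' : ∀ t ∈ interior D, HasDerivWithinAt γ (γ' t) (interior D) t)
    (hγ'' : ∀ t ∈ interior D, HasDerivWithinAt γ' (γ'' t) (interior D) t)
    (hnonneg : ∀ t ∈ interior D, 0 ≤ inner ℝ (γ t - p) (γ'' t) + ‖γ' t‖ ^ 2) :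
    ConvexOn ℝ D (fun t => dist (γ t) p ^ 2) := by
  simp only [dist_eq_norm]
  refine convexOn_of_hasDerivWithinAt2_nonneg
    (f' := fun t => 2 * inner ℝ (γ t - p) (γ' t))
    (f'' := fun t => 2 * (inner ℝ (γ t - p) (γ'' t) + ‖γ' t‖ ^ 2)) hD
    ((hγ.sub continuousOn_const).norm.pow 2)
    (fun t ht => ((hγ' t ht).sub_const p).norm_sq) (fun t ht => ?_)
    (fun t ht => mul_nonneg zero_le_two (hnonneg t ht))
  rw [← real_inner_self_eq_norm_sq]
  exact (((hγ' t ht).sub_const p).inner ℝ (hγ'' t ht)).const_mul 2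

theorem convexOn_dist_sq_of_dist_mul_norm_le {D : Set ℝ} {p : E} (hD : Convex ℝ D)
    (hγ : ContinuousOn γ D)
    (hγ' : ∀ t ∈ interior D, HasDerivWithinAt γ (γ' t) (interior D) t)
    (hγ'' : ∀ t ∈ interior D, HasDerivWithinAt γ' (γ'' t) (interior D) t)
    (hcurv : ∀ t ∈ interior D, dist (γ t) p * ‖γ'' t‖ ≤ ‖γ' t‖ ^ 2) :
    ConvexOn ℝ D (fun t => dist (γ t) p ^ 2) := by
  refine convexOn_dist_sq_of_inner_add_nonneg hD hγ hγ' hγ'' fun t ht => ?_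
  have hinner : |inner ℝ (γ t - p) (γ'' t)| ≤ ‖γ' t‖ ^ 2 := calc
    _ ≤ ‖γ t - p‖ * ‖γ'' t‖ := abs_real_inner_le_norm _ _
    _ = dist (γ t) p * ‖γ'' t‖ := by rw [dist_eq_norm]
    _ ≤ ‖γ' t‖ ^ 2 := hcurv t ht
  linarith [neg_le_of_abs_le hinner]

theorem diam_eq_dist_endpoints_of_small_curvature_general {a b : ℝ} (hab : a ≤ b)
    (hγ' : ∀ t ∈ Icc a b, HasDerivWithinAt γ (γ' t) (Icc a b) t)
    (hγ'' : ∀ t ∈ Icc a b, HasDerivWithinAt γ' (γ'' t) (Icc a b) t)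
    (hcurv : ∀ t ∈ Icc a b, diam (γ '' Icc a b) * ‖γ'' t‖ ≤ ‖γ' t‖ ^ 2) :
    diam (γ '' Icc a b) = dist (γ a) (γ b) := by
  have hcont : ContinuousOn γ (Icc a b) := fun t ht => (hγ' t ht).continuousWithinAt
  have hbdd : Bornology.IsBounded (γ '' Icc a b) :=
    (isCompact_Icc.image_of_continuousOn hcont).isBounded
  have hconv : ∀ p ∈ γ '' Icc a b, ConvexOn ℝ (Icc a b) (fun t => dist (γ t) p ^ 2) :=
    fun p hp => convexOn_dist_sq_of_dist_mul_norm_le (convex_Icc a b) hcont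
      (fun t ht => (hγ' t (interior_subset ht)).mono interior_subset)
      (fun t ht => (hγ'' t (interior_subset ht)).mono interior_subset) fun t ht => by
        have ht' : t ∈ Icc a b := interior_subset ht
        grw [dist_le_diam_of_mem hbdd (mem_image_of_mem γ ht') hp, hcurv t ht']
  refine diam_eq_dist_of_forall_dist_le_max (mem_image_of_mem γ (left_mem_Icc.2 hab))
    (mem_image_of_mem γ (right_mem_Icc.2 hab)) fun p hp => ?_
  rintro _ ⟨t, ht, rfl⟩
  exact dist_le_max_of_convexOn_dist_sq (hconv p hp) ht

end InnerProductSpace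

/-- Let `γ : [a,b] → ℝ^d` be a C² curve with unit speed. If
`R > 0`, `‖γ'' t‖ ≤ 1/R` for all `t ∈ [a,b]` and `diam (γ([a,b])) < R`, then
`diam (γ([a,b])) = dist (γ a) (γ b)`. -/
theorem diam_eq_dist_endpoints_of_small_curvature {d : ℕ}
    (γ γ' γ'' : ℝ → Euc d) (a b R : ℝ) (hab : a ≤ b)
    (hd1 : ∀ t ∈ Set.Icc a b, HasDerivWithinAt γ (γ' t) (Set.Icc a b) t)
    (hd2 : ∀ t ∈ Set.Icc a b, HasDerivWithinAt γ' (γ'' t) (Set.Icc a b) t)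
    (hcont : ContinuousOn γ'' (Set.Icc a b))
    (hunit : ∀ t ∈ Set.Icc a b, ‖γ' t‖ = 1)
    (hR : 0 < R) (hcurv : ∀ t ∈ Set.Icc a b, ‖γ'' t‖ ≤ 1 / R)
    (hdiam : Metric.diam (γ '' Set.Icc a b) < R) :
    Metric.diam (γ '' Set.Icc a b) = dist (γ a) (γ b) := by
  refine diam_eq_dist_endpoints_of_small_curvature_general hab hd1 hd2 fun t ht => ?_
  grw [hdiam, hcurv t ht, hunit t ht, mul_one_div_cancel hR.ne', one_pow]
end
end

section
/- On ℝ² consider the vector field X(x,y) = (x² + y²)·(−y, x), whose flow φ rotates each point p by angle ‖p‖²·t (i.e. φ_t(p) = R_{‖p‖² t}(p), where R_θ is rotation by θ about the origin), and consider the compact φ-invariant set Λ = {p ∈ ℝ² : ‖p‖ = e^{−n} for some integer n ≥ 1} ∪ {(0,0)}. Then the restricted flow φ|Λ is rescaling expansive. -/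
open Metric Set Function

noncomputable section

/-- A flow on a subset `M` of a topological space: continuous on `ℝ × M`, maps `M`
to itself, `φ_0 = id` and `φ_{s+t} = φ_s ∘ φ_t` on `M`. -/
def FlowOn {α : Type*} [TopologicalSpace α] (φ : ℝ → α → α) (M : Set α) : Prop :=
  ContinuousOn (fun p : ℝ × α => φ p.1 p.2) (Set.univ ×ˢ M) ∧
  (∀ t : ℝ, Set.MapsTo (φ t) M M) ∧ (∀ x ∈ M, φ 0 x = x) ∧
  ∀ s t : ℝ, ∀ x ∈ M, φ (s + t) x = φ s (φ t x)

/-- The fixed points of the flow lying in `M`. -/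
def fixOn {α : Type*} (φ : ℝ → α → α) (M : Set α) : Set α :=
  {σ ∈ M | ∀ t : ℝ, φ t σ = σ}

/-- `φ|Λ` is rescaling expansive (with velocity field `X`): for all `ε > 0` there is
`δ > 0` such that if `x, y ∈ Λ`, `h ∈ H⁺₀(ℝ)` and
`dist (φ_t x) (φ_{h t} y) ≤ δ‖X (φ_t x)‖` for all `t`, then
`φ_{h t} y ∈ φ_{[-ε,ε]} (φ_t x)` for all `t`. -/
def RescalingExpansive {d : ℕ} (φ : ℝ → Euc d → Euc d) (X : Euc d → Euc d)
    (Λ : Set (Euc d)) : Prop :=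
  ∀ ε > (0 : ℝ), ∃ δ > (0 : ℝ), ∀ x ∈ Λ, ∀ y ∈ Λ, ∀ h : ℝ → ℝ, IsHplus0 h →
    (∀ t : ℝ, dist (φ t x) (φ (h t) y) ≤ δ * ‖X (φ t x)‖) →
    ∀ t : ℝ, φ (h t) y ∈ arc φ (φ t x) (-ε) ε

/-- Rotation of the plane by angle `θ` about the origin. -/
def rot (θ : ℝ) (p : Euc 2) : Euc 2 :=
  (WithLp.equiv 2 (Fin 2 → ℝ)).symm
    ![Real.cos θ * p 0 - Real.sin θ * p 1, Real.sin θ * p 0 + Real.cos θ * p 1]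

/-- The vector field `X(x, y) = (x² + y²)·(−y, x)` on `ℝ²`. -/
def Xex (p : Euc 2) : Euc 2 :=
  (WithLp.equiv 2 (Fin 2 → ℝ)).symm
    ![(p 0 ^ 2 + p 1 ^ 2) * (-(p 1)), (p 0 ^ 2 + p 1 ^ 2) * p 0]

/-- The flow of `Xex`: it rotates each point `p` by the angle `‖p‖² · t`. -/
def phiEx (t : ℝ) (p : Euc 2) : Euc 2 := rot (‖p‖ ^ 2 * t) p

/-- The compact invariant set
`Λ = {p ∈ ℝ² : ‖p‖ = e^{−n}, n ∈ ℤ, n ≥ 1} ∪ {(0,0)}`. -/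
def LamEx : Set (Euc 2) :=
  {p : Euc 2 | ∃ n : ℕ, 1 ≤ n ∧ ‖p‖ = Real.exp (-(n : ℝ))} ∪ {0}

/-!
Under the identification of the plane with `ℂ`, the flow acts on the circle of radius `r` by the
rotations `exp (r² t i)`, and the speed there is `r³`. The radii `e⁻ⁿ` are at most `1` and distinct
radii differ by more than half of either, hence by more than `r³ / 2`; so a point of `Λ` which is
`r³ / 2`-close to a point of radius `r` lies on the same circle. On that circle a chord is at least
`2 / π` times the arc it subtends, and the flow traverses this arc in time arc length divided by
speed.
-/

/-- The isometric identification of `ℂ` with the plane, `x + y i ↦ (x, y)`, which turns `rot`, `Xex`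
and `phiEx` into complex multiplications. -/
def planeOfComplex : ℂ ≃ₗᵢ[ℝ] Euc 2 := Complex.orthonormalBasisOneI.repr

@[simp] lemma planeOfComplex_apply_zero (z : ℂ) : planeOfComplex z 0 = z.re := by
  simp [planeOfComplex]

@[simp] lemma planeOfComplex_apply_one (z : ℂ) : planeOfComplex z 1 = z.im := by
  simp [planeOfComplex]

lemma rot_planeOfComplex (θ : ℝ) (z : ℂ) :
    rot θ (planeOfComplex z) = planeOfComplex (Complex.exp (θ * Complex.I) * z) := by
  ext i
  fin_cases i <;> simp [rot, Complex.exp_ofReal_mul_I_re, Complex.exp_ofReal_mul_I_im, add_comm]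

lemma Xex_planeOfComplex (z : ℂ) :
    Xex (planeOfComplex z) = planeOfComplex ((‖z‖ ^ 2 : ℝ) * (Complex.I * z)) := by
  have norm_sq : z.re ^ 2 + z.im ^ 2 = ‖z‖ ^ 2 := by
    rw [Complex.sq_norm, Complex.normSq_apply, sq, sq]
  ext i
  fin_cases i <;> simp [Xex, norm_sq, -Complex.ofReal_pow]

lemma norm_rot (θ : ℝ) (p : Euc 2) : ‖rot θ p‖ = ‖p‖ := by
  obtain ⟨z, rfl⟩ := planeOfComplex.surjective p
  simp [rot_planeOfComplex, Complex.norm_exp_ofReal_mul_I]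

lemma norm_Xex (p : Euc 2) : ‖Xex p‖ = ‖p‖ ^ 3 := by
  obtain ⟨z, rfl⟩ := planeOfComplex.surjective p
  simp [Xex_planeOfComplex, pow_succ]

lemma norm_phiEx (t : ℝ) (p : Euc 2) : ‖phiEx t p‖ = ‖p‖ := norm_rot _ p

lemma abs_norm_sub_norm_le_dist_phiEx (s t : ℝ) (x y : Euc 2) :
    |‖x‖ - ‖y‖| ≤ dist (phiEx s x) (phiEx t y) := by
  simpa only [norm_phiEx, dist_eq_norm] using abs_norm_sub_norm_le (phiEx s x) (phiEx t y)

lemma exists_exp_mul_I_mul_eq {z w : ℂ} (h : ‖z‖ = ‖w‖) :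
    ∃ θ : ℝ, Complex.exp (θ * Complex.I) * z = w ∧ ‖z‖ * |θ| ≤ Real.pi / 2 * ‖z - w‖ := by
  obtain rfl | hz := eq_or_ne z 0
  · obtain rfl : w = 0 := norm_eq_zero.1 (h.symm.trans norm_zero)
    exact ⟨0, by simp⟩
  have hw : w ≠ 0 := norm_ne_zero_iff.1 (h ▸ norm_ne_zero_iff.2 hz)
  have norm_quotient : ‖w / z‖ = 1 := by rw [norm_div, h, div_self (norm_ne_zero_iff.2 hw)]
  refine ⟨(w / z).arg, ?_, ?_⟩
  · have polar := Complex.norm_mul_exp_arg_mul_I (w / z)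
    rw [norm_quotient, Complex.ofReal_one, one_mul] at polar
    rw [polar, div_mul_cancel₀ w hz]
  · calc ‖z‖ * |(w / z).arg|
        = ‖z‖ * InnerProductGeometry.angle 1 (w / z) := by
          rw [Complex.angle_one_left (div_ne_zero hw hz)]
      _ ≤ ‖z‖ * (Real.pi / 2 * ‖1 - w / z‖) := by
          gcongr
          exact Complex.angle_le_mul_norm_sub norm_one norm_quotient
      _ = Real.pi / 2 * ‖z * (1 - w / z)‖ := by rw [norm_mul]; ring
      _ = Real.pi / 2 * ‖z - w‖ := by rw [mul_sub, mul_one, mul_div_cancel₀ w hz]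

lemma exists_rot_eq {p q : Euc 2} (h : ‖p‖ = ‖q‖) :
    ∃ θ : ℝ, rot θ p = q ∧ ‖p‖ * |θ| ≤ Real.pi / 2 * dist p q := by
  obtain ⟨z, rfl⟩ := planeOfComplex.surjective p
  obtain ⟨w, rfl⟩ := planeOfComplex.surjective q
  simp only [planeOfComplex.norm_map] at h
  obtain ⟨θ, rfl, hθ⟩ := exists_exp_mul_I_mul_eq h
  refine ⟨θ, rot_planeOfComplex θ z, ?_⟩
  rwa [planeOfComplex.norm_map, planeOfComplex.dist_map, dist_eq_norm]

-- At the fixed point `p = 0` the quotient is `0 / 0 = 0`, matched by `τ = 0`.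
lemma exists_phiEx_eq {p q : Euc 2} (h : ‖p‖ = ‖q‖) :
    ∃ τ : ℝ, phiEx τ p = q ∧ |τ| ≤ Real.pi / 2 * (dist p q / ‖Xex p‖) := by
  obtain rfl | hp := eq_or_ne p 0
  · obtain rfl : q = 0 := norm_eq_zero.1 (h.symm.trans norm_zero)
    exact ⟨0, norm_eq_zero.1 ((norm_phiEx 0 0).trans norm_zero), by simp⟩
  have angular_speed_pos : 0 < ‖p‖ ^ 2 := by positivity
  obtain ⟨θ, hrot, harc⟩ := exists_rot_eq h
  refine ⟨θ / ‖p‖ ^ 2, by rw [phiEx, mul_div_cancel₀ θ angular_speed_pos.ne', hrot], ?_⟩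
  calc |θ / ‖p‖ ^ 2| = ‖p‖ * |θ| / ‖Xex p‖ := by
        rw [norm_Xex, abs_div, abs_of_pos angular_speed_pos]
        field_simp
    _ ≤ Real.pi / 2 * dist p q / ‖Xex p‖ := by gcongr
    _ = Real.pi / 2 * (dist p q / ‖Xex p‖) := mul_div_assoc _ _ _

lemma mem_arc_phiEx_of_dist_le {p q : Euc 2} {ε : ℝ} (hε : 0 ≤ ε) (h : ‖p‖ = ‖q‖)
    (hd : dist p q ≤ 2 / Real.pi * ε * ‖Xex p‖) : q ∈ arc phiEx p (-ε) ε := by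
  obtain ⟨τ, hτ, htime⟩ := exists_phiEx_eq h
  have abs_le_eps : |τ| ≤ ε :=
    calc |τ| ≤ Real.pi / 2 * (dist p q / ‖Xex p‖) := htime
      _ ≤ Real.pi / 2 * (2 / Real.pi * ε) := by
        gcongr
        exact div_le_of_le_mul₀ (norm_nonneg _) (by positivity) hd
      _ = ε := by field_simp
  exact ⟨τ, by rwa [uIcc_of_le (neg_le_self hε), mem_Icc, ← abs_le], hτ⟩

lemma exp_div_two_lt_abs_exp_sub_exp {a b : ℝ} (h : 1 ≤ |a - b|) :
    Real.exp a / 2 < |Real.exp a - Real.exp b| := by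
  have two_mul_exp_lt {c d : ℝ} (hcd : c + 1 ≤ d) : 2 * Real.exp c < Real.exp d :=
    calc 2 * Real.exp c < Real.exp 1 * Real.exp c := by gcongr; exact Real.exp_one_gt_two
      _ = Real.exp (c + 1) := by rw [← Real.exp_add, add_comm]
      _ ≤ Real.exp d := Real.exp_le_exp.2 hcd
  rcases le_abs.1 h with hba | hab
  · exact lt_abs.2 (.inl (by linarith [two_mul_exp_lt (c := b) (d := a) (by linarith)]))
  · have := Real.exp_pos a
    exact lt_abs.2 (.inr (by linarith [two_mul_exp_lt (c := a) (d := b) (by linarith)]))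

lemma norm_le_one_of_mem_LamEx {p : Euc 2} (hp : p ∈ LamEx) : ‖p‖ ≤ 1 := by
  rcases hp with ⟨n, -, hn⟩ | rfl
  · rw [hn, Real.exp_le_one_iff]
    exact neg_nonpos.2 n.cast_nonneg
  · simp

lemma norm_div_two_lt_abs_norm_sub_norm_of_mem_LamEx {p q : Euc 2} (hp : p ∈ LamEx)
    (hq : q ∈ LamEx) (hpq : ‖p‖ ≠ ‖q‖) : ‖p‖ / 2 < |‖p‖ - ‖q‖| := by
  rcases hp with ⟨m, -, hm⟩ | rfl
  · rcases hq with ⟨n, -, hn⟩ | rfl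
    · have hmn : (m : ℤ) ≠ n := fun h ↦ hpq (by rw [hm, hn, Nat.cast_inj.1 h])
      have one_le : 1 ≤ |(-m - -n : ℝ)| := by
        exact_mod_cast Int.one_le_abs (sub_ne_zero.2 (neg_injective.ne hmn))
      rw [hm, hn]
      exact exp_div_two_lt_abs_exp_sub_exp one_le
    · simpa using hpq
  · simpa using hpq.symm

lemma half_mul_norm_Xex_lt_abs_norm_sub_norm_of_mem_LamEx {p q : Euc 2} (hp : p ∈ LamEx)
    (hq : q ∈ LamEx) (hpq : ‖p‖ ≠ ‖q‖) : 1 / 2 * ‖Xex p‖ < |‖p‖ - ‖q‖| :=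
  calc 1 / 2 * ‖Xex p‖ = ‖p‖ ^ 3 / 2 := by rw [norm_Xex]; ring
    _ ≤ ‖p‖ / 2 := by
      gcongr
      exact pow_le_of_le_one (norm_nonneg p) (norm_le_one_of_mem_LamEx hp) three_ne_zero
    _ < |‖p‖ - ‖q‖| := norm_div_two_lt_abs_norm_sub_norm_of_mem_LamEx hp hq hpq

theorem rescalingExpansive_phiEx_general {Λ : Set (Euc 2)} {c : ℝ} (hc : 0 < c)
    (radii_separated : ∀ x ∈ Λ, ∀ y ∈ Λ, ‖x‖ ≠ ‖y‖ → c * ‖Xex x‖ < |‖x‖ - ‖y‖|) :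
    RescalingExpansive phiEx Xex Λ := by
  intro ε hε
  refine ⟨min c (2 / Real.pi * ε), by positivity, fun x hx y hy h _ hd t ↦ ?_⟩
  have norm_eq : ‖x‖ = ‖y‖ := by
    by_contra hxy
    refine (radii_separated x hx y hy hxy).not_ge ?_
    calc |‖x‖ - ‖y‖| ≤ dist (phiEx t x) (phiEx (h t) y) := abs_norm_sub_norm_le_dist_phiEx ..
      _ ≤ c * ‖Xex (phiEx t x)‖ := (hd t).trans (by gcongr; exact min_le_left _ _)
      _ = c * ‖Xex x‖ := by simp only [norm_Xex, norm_phiEx]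
  refine mem_arc_phiEx_of_dist_le hε.le (by simpa only [norm_phiEx]) ((hd t).trans ?_)
  gcongr
  exact min_le_right _ _

/-- The flow of `X(x,y) = (x² + y²)(−y, x)` restricted to
`Λ = {‖p‖ = e^{−n} : n ≥ 1} ∪ {0}` is rescaling expansive. -/
theorem rescalingExpansive_phiEx : RescalingExpansive phiEx Xex LamEx :=
  rescalingExpansive_phiEx_general one_half_pos fun _ hp _ hq ↦
    half_mul_norm_Xex_lt_abs_norm_sub_norm_of_mem_LamEx hp hq
end
end

section
/- Let S ⊂ ℝ³ be the unit sphere x² + y² + z² = 1 and let X be the tangent vector field on S defined by X(x,y,z) = (x² + y²)·(xz, yz, −x² − y²). Then any flow φ on S with velocity field X (i.e. satisfying (d/dt)φ_t(p) = X(φ_t(p)) for all p ∈ S and t ∈ ℝ) is rescaling expansive on S. -/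
/-!
At a point `(x, y, z)` of the sphere write `u = (x, y)` and `ρ = ‖u‖`. The field reads
`u' = ρ² z u`, `z' = -ρ⁴` and has norm `ρ³`. The first equation is linear in `u`, so the orbits are
the open meridians, on which the direction `u / ρ` is constant; the cotangent `w = z / ρ` of the
polar angle satisfies `w' = -1 / √(1 + w²)`, so a primitive of `√(1 + w²)` measures time along them.

If `dist p q ≤ δ ρ(p)³`, the directions of `p` and `q` differ by at most `2 δ ρ(p)²`. Along a pair
of orbits shadowing each other this difference is constant, whereas `ρ → 0`; hence both orbits lie
on the same meridian. There `w(p)` and `w(q)` differ by at most `2 δ ρ(p)`, and the primitive, whose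
derivative `1 / ρ` is at most `2 / ρ(p)` in between, turns this into a time difference of at most
`4 δ`.
-/

open Metric Set Function

noncomputable section

/-- The vector field `X(x,y,z) = (x² + y²)·(xz, yz, −x² − y²)`, tangent to the
unit sphere of `ℝ³`. -/
def Xsph (p : Euc 3) : Euc 3 :=
  (WithLp.equiv 2 (Fin 3 → ℝ)).symm
    ![(p 0 ^ 2 + p 1 ^ 2) * (p 0 * p 2),
      (p 0 ^ 2 + p 1 ^ 2) * (p 1 * p 2),
      (p 0 ^ 2 + p 1 ^ 2) * (-(p 0 ^ 2) - p 1 ^ 2)]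

open NormedSpace Filter Topology

section LinearEquation

variable {E : Type*} [NormedAddCommGroup E] [NormedSpace ℝ E] {a : ℝ → ℝ} {f : ℝ → E}

lemma eq_exp_integral_smul_of_isIntegralCurve_smul (ha : Continuous a)
    (hf : IsIntegralCurve f fun t x => a t • x) (t₀ t : ℝ) :
    f t = Real.exp (∫ s in t₀..t, a s) • f t₀ := by
  set A : ℝ → ℝ := fun t => ∫ s in t₀..t, a s
  have hd (s : ℝ) : HasDerivAt (fun s => Real.exp (-A s) • f s) 0 s := by
    have hA : HasDerivAt A (a s) s := (ha.integral_hasStrictDerivAt t₀ s).hasDerivAt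
    refine (hA.neg.exp.smul (hf s)).congr_deriv ?_
    module
  have h : Real.exp (-A t) • f t = f t₀ := by
    simpa [A] using is_const_of_deriv_eq_zero (fun s => (hd s).differentiableAt)
      (fun s => (hd s).deriv) t t₀
  rw [← h, smul_smul, ← Real.exp_add, add_neg_cancel, Real.exp_zero, one_smul]

lemma ne_zero_of_isIntegralCurve_smul (ha : Continuous a)
    (hf : IsIntegralCurve f fun t x => a t • x) {t₀ : ℝ} (h₀ : f t₀ ≠ 0) (t : ℝ) : f t ≠ 0 := by
  rw [eq_exp_integral_smul_of_isIntegralCurve_smul ha hf t₀ t]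
  exact smul_ne_zero (Real.exp_ne_zero _) h₀

lemma normalize_eq_of_isIntegralCurve_smul (ha : Continuous a)
    (hf : IsIntegralCurve f fun t x => a t • x) (s t : ℝ) :
    normalize (f s) = normalize (f t) := by
  rw [eq_exp_integral_smul_of_isIntegralCurve_smul ha hf t s,
    normalize_smul_of_pos (Real.exp_pos _)]

lemma hasDerivAt_norm_of_isIntegralCurve_smul (ha : Continuous a)
    (hf : IsIntegralCurve f fun t x => a t • x) (t : ℝ) :
    HasDerivAt (fun s => ‖f s‖) (a t * ‖f t‖) t := by
  have hnorm : (fun s => ‖f s‖) = fun s => Real.exp (∫ r in t..s, a r) * ‖f t‖ := by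
    ext s
    rw [eq_exp_integral_smul_of_isIntegralCurve_smul ha hf t s, norm_smul,
      Real.norm_of_nonneg (Real.exp_pos _).le]
  rw [hnorm]
  simpa using (ha.integral_hasStrictDerivAt t t).hasDerivAt.exp.mul_const ‖f t‖

end LinearEquation

lemma norm_eq_of_isIntegralCurve_of_inner_eq_zero {E : Type*} [NormedAddCommGroup E]
    [InnerProductSpace ℝ E] {v : ℝ → E → E} (hv : ∀ t x, inner ℝ x (v t x) = 0) {γ : ℝ → E}
    (hγ : IsIntegralCurve γ v) (s t : ℝ) : ‖γ s‖ = ‖γ t‖ := by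
  have hd (r : ℝ) : HasDerivAt (fun r => ‖γ r‖ ^ 2) 0 r := by
    simpa [hv] using (hγ r).norm_sq
  have h : ‖γ s‖ ^ 2 = ‖γ t‖ ^ 2 :=
    is_const_of_deriv_eq_zero (fun r => (hd r).differentiableAt) (fun r => (hd r).deriv) s t
  exact (sq_eq_sq₀ (norm_nonneg _) (norm_nonneg _)).1 h

lemma norm_normalize_sub_normalize_mul_norm_le {E : Type*} [NormedAddCommGroup E]
    [NormedSpace ℝ E] (x y : E) : ‖normalize x - normalize y‖ * ‖x‖ ≤ 2 * ‖x - y‖ := by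
  have hsplit : ‖x‖ • (normalize x - normalize y) = (x - y) + (‖y‖ - ‖x‖) • normalize y := by
    rw [smul_sub, sub_smul, norm_smul_normalize, norm_smul_normalize]
    abel
  have hy : ‖normalize y‖ ≤ 1 := by
    rcases eq_or_ne y 0 with rfl | hy
    · simp
    · exact (norm_normalize hy).le
  calc ‖normalize x - normalize y‖ * ‖x‖ = ‖(x - y) + (‖y‖ - ‖x‖) • normalize y‖ := by
        rw [← hsplit, norm_smul, norm_norm, mul_comm]
    _ ≤ ‖x - y‖ + |‖y‖ - ‖x‖| * ‖normalize y‖ := by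
        simpa [norm_smul] using norm_add_le (x - y) ((‖y‖ - ‖x‖) • normalize y)
    _ ≤ ‖x - y‖ + ‖x - y‖ * 1 := by
        gcongr
        rw [norm_sub_rev x y]
        exact abs_norm_sub_norm_le y x
    _ = 2 * ‖x - y‖ := by ring

/-- The signed time taken by a solution of `w' = -1 / √(1 + w²)` to go from `w` to `0`. -/
def cotTime (w : ℝ) : ℝ := ∫ s in 0..w, √(1 + s ^ 2)

lemma hasDerivAt_cotTime (w : ℝ) : HasDerivAt cotTime (√(1 + w ^ 2)) w :=
  ((by fun_prop : Continuous fun s : ℝ => √(1 + s ^ 2)).integral_hasStrictDerivAt 0 w).hasDerivAt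

lemma strictMono_cotTime : StrictMono cotTime :=
  strictMono_of_deriv_pos fun w => by
    rw [(hasDerivAt_cotTime w).deriv]
    positivity

lemma abs_cotTime_sub_le {v w C : ℝ} (hv : √(1 + v ^ 2) ≤ C) (hw : √(1 + w ^ 2) ≤ C) :
    |cotTime v - cotTime w| ≤ C * |v - w| := by
  refine (convex_uIcc v w).norm_image_sub_le_of_norm_hasDerivWithin_le
    (fun u _ => (hasDerivAt_cotTime u).hasDerivWithinAt) (fun u hu => ?_)
    right_mem_uIcc left_mem_uIcc
  have hu_le : |u| ≤ max |v| |w| := by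
    rcases mem_uIcc.1 hu with h | h
    · exact abs_le_max_abs_abs h.1 h.2
    · exact max_comm |w| |v| ▸ abs_le_max_abs_abs h.1 h.2
  rw [Real.norm_of_nonneg (Real.sqrt_nonneg _)]
  rcases le_max_iff.1 hu_le with h | h
  · exact (Real.sqrt_le_sqrt (by linarith [sq_le_sq.2 h])).trans hv
  · exact (Real.sqrt_le_sqrt (by linarith [sq_le_sq.2 h])).trans hw

/-- The horizontal component of a point of `ℝ³`: its norm is the distance to the vertical axis, and
on the sphere it vanishes exactly at the two poles. -/
def horiz : Euc 3 →L[ℝ] Euc 2 :=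
  ((EuclideanSpace.equiv (Fin 2) ℝ).symm : (Fin 2 → ℝ) →L[ℝ] Euc 2) ∘L
    .pi ![EuclideanSpace.proj 0, EuclideanSpace.proj 1]

lemma horiz_apply (p : Euc 3) : horiz p = !₂[p 0, p 1] := by
  ext i
  fin_cases i <;> rfl

/-- The cotangent of the polar angle, with the junk value `0` on the vertical axis. -/
def polarCot (p : Euc 3) : ℝ := p 2 / ‖horiz p‖

section Geometry

variable {p q : Euc 3}

lemma norm_sq_eq_norm_horiz_sq_add_sq (p : Euc 3) : ‖p‖ ^ 2 = ‖horiz p‖ ^ 2 + p 2 ^ 2 := by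
  simp [EuclideanSpace.real_norm_sq_eq, horiz_apply, Fin.sum_univ_succ, add_assoc]

lemma norm_horiz_sq_add_sq (hp : p ∈ sphere (0 : Euc 3) 1) : ‖horiz p‖ ^ 2 + p 2 ^ 2 = 1 := by
  rw [← norm_sq_eq_norm_horiz_sq_add_sq, mem_sphere_zero_iff_norm.1 hp, one_pow]

lemma norm_horiz_sub_sq_add_sq (p q : Euc 3) :
    ‖horiz p - horiz q‖ ^ 2 + (p 2 - q 2) ^ 2 = dist p q ^ 2 := by
  rw [dist_eq_norm, norm_sq_eq_norm_horiz_sq_add_sq, map_sub, PiLp.sub_apply]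

lemma norm_horiz_sub_le (p q : Euc 3) : ‖horiz p - horiz q‖ ≤ dist p q :=
  le_of_sq_le_sq (by linarith [norm_horiz_sub_sq_add_sq p q, sq_nonneg (p 2 - q 2)]) dist_nonneg

lemma abs_polarCot_sub_le (hq : q ∈ sphere (0 : Euc 3) 1) (hp₀ : horiz p ≠ 0)
    (hq₀ : horiz q ≠ 0) :
    |polarCot p - polarCot q| ≤ dist p q / (‖horiz p‖ * ‖horiz q‖) := by
  set ρ := ‖horiz p‖
  set σ := ‖horiz q‖
  have hρ_pos : 0 < ρ := norm_pos_iff.2 hp₀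
  have hσ_pos : 0 < σ := norm_pos_iff.2 hq₀
  have hdiff : polarCot p - polarCot q = (p 2 * σ - ρ * q 2) / (ρ * σ) :=
    div_sub_div _ _ hρ_pos.ne' hσ_pos.ne'
  have hunit : σ ^ 2 + q 2 ^ 2 = 1 := norm_horiz_sq_add_sq hq
  have hplane : (ρ - σ) ^ 2 + (p 2 - q 2) ^ 2 ≤ dist p q ^ 2 := by
    rw [← norm_horiz_sub_sq_add_sq]
    gcongr ?_ + _
    exact sq_le_sq.2 ((abs_norm_sub_norm_le _ _).trans (le_abs_self _))
  have hlagrange : (p 2 * σ - ρ * q 2) ^ 2 + ((ρ - σ) * σ + (p 2 - q 2) * q 2) ^ 2 =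
      ((ρ - σ) ^ 2 + (p 2 - q 2) ^ 2) * (σ ^ 2 + q 2 ^ 2) := by ring
  have hcross : |p 2 * σ - ρ * q 2| ≤ dist p q := by
    refine abs_le_of_sq_le_sq ?_ dist_nonneg
    rw [hunit, mul_one] at hlagrange
    linarith [sq_nonneg ((ρ - σ) * σ + (p 2 - q 2) * q 2)]
  rw [hdiff, abs_div, abs_of_pos (mul_pos hρ_pos hσ_pos)]
  gcongr

lemma sqrt_one_add_polarCot_sq (hp : p ∈ sphere (0 : Euc 3) 1) (hp₀ : horiz p ≠ 0) :
    √(1 + polarCot p ^ 2) = ‖horiz p‖⁻¹ := by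
  have hne : ‖horiz p‖ ≠ 0 := norm_ne_zero_iff.2 hp₀
  rw [Real.sqrt_eq_iff_mul_self_eq (by positivity) (by positivity), polarCot]
  field_simp
  linarith [norm_horiz_sq_add_sq hp]

lemma eq_of_normalize_horiz_eq_of_polarCot_eq (hp : p ∈ sphere (0 : Euc 3) 1)
    (hq : q ∈ sphere (0 : Euc 3) 1) (hp₀ : horiz p ≠ 0) (hq₀ : horiz q ≠ 0)
    (hdir : normalize (horiz p) = normalize (horiz q)) (hcot : polarCot p = polarCot q) :
    p = q := by
  have hnorm : ‖horiz p‖ = ‖horiz q‖ := inv_injective <| by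
    rw [← sqrt_one_add_polarCot_sq hp hp₀, ← sqrt_one_add_polarCot_sq hq hq₀, hcot]
  have hhoriz : horiz p = horiz q := by
    rw [← norm_smul_normalize (horiz p), hdir, hnorm, norm_smul_normalize]
  have hheight : p 2 = q 2 := by
    rwa [polarCot, polarCot, hnorm, div_left_inj' (norm_ne_zero_iff.2 hq₀)] at hcot
  ext i
  fin_cases i
  exacts [congr($hhoriz 0), congr($hhoriz 1), hheight]

end Geometry

section VectorField

lemma norm_horiz_sq (p : Euc 3) : ‖horiz p‖ ^ 2 = p 0 ^ 2 + p 1 ^ 2 := by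
  simp [EuclideanSpace.real_norm_sq_eq, horiz_apply]

lemma horiz_Xsph (p : Euc 3) : horiz (Xsph p) = (‖horiz p‖ ^ 2 * p 2) • horiz p := by
  rw [norm_horiz_sq]
  ext i
  fin_cases i <;> simp [horiz_apply, Xsph] <;> ring

lemma Xsph_apply_two (p : Euc 3) : Xsph p 2 = -‖horiz p‖ ^ 4 := by
  rw [show ‖horiz p‖ ^ 4 = (‖horiz p‖ ^ 2) ^ 2 by ring, norm_horiz_sq]
  simp [Xsph]
  ring

lemma inner_Xsph_eq_zero (p : Euc 3) : inner ℝ p (Xsph p) = 0 := by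
  simp [PiLp.inner_apply, Fin.sum_univ_three, Xsph]
  ring

lemma norm_Xsph {p : Euc 3} (hp : p ∈ sphere (0 : Euc 3) 1) : ‖Xsph p‖ = ‖horiz p‖ ^ 3 := by
  rw [← sq_eq_sq₀ (norm_nonneg _) (by positivity), norm_sq_eq_norm_horiz_sq_add_sq, horiz_Xsph,
    Xsph_apply_two, norm_smul, mul_pow, Real.norm_eq_abs, sq_abs]
  linear_combination ‖horiz p‖ ^ 6 * norm_horiz_sq_add_sq hp

end VectorField

section RescaledDistance

variable {p q : Euc 3} {δ : ℝ}

lemma norm_normalize_horiz_sub_le (hp : p ∈ sphere (0 : Euc 3) 1)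
    (h : dist p q ≤ δ * ‖Xsph p‖) :
    ‖normalize (horiz p) - normalize (horiz q)‖ ≤ 2 * δ * ‖horiz p‖ ^ 2 := by
  rw [norm_Xsph hp] at h
  rcases eq_or_ne (horiz p) 0 with hp₀ | hp₀
  · have hpq : p = q := dist_le_zero.1 (by simpa [hp₀] using h)
    simp [← hpq, hp₀]
  · refine le_of_mul_le_mul_right ?_ (norm_pos_iff.2 hp₀)
    calc ‖normalize (horiz p) - normalize (horiz q)‖ * ‖horiz p‖
        ≤ 2 * ‖horiz p - horiz q‖ := norm_normalize_sub_normalize_mul_norm_le _ _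
      _ ≤ 2 * (δ * ‖horiz p‖ ^ 3) := by gcongr; exact (norm_horiz_sub_le p q).trans h
      _ = 2 * δ * ‖horiz p‖ ^ 2 * ‖horiz p‖ := by ring

lemma half_norm_horiz_le (hp : p ∈ sphere (0 : Euc 3) 1) (hδ : δ ≤ 1 / 2)
    (h : dist p q ≤ δ * ‖Xsph p‖) : ‖horiz p‖ / 2 ≤ ‖horiz q‖ := by
  rw [norm_Xsph hp] at h
  have hle : ‖horiz p‖ ≤ 1 :=
    (sq_le_one_iff₀ (norm_nonneg _)).1 (by linarith [norm_horiz_sq_add_sq hp, sq_nonneg (p 2)])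
  have hdist : ‖horiz p‖ - ‖horiz q‖ ≤ ‖horiz p‖ / 2 := calc
    ‖horiz p‖ - ‖horiz q‖ ≤ ‖horiz p - horiz q‖ := norm_sub_norm_le _ _
    _ ≤ δ * ‖horiz p‖ ^ 3 := (norm_horiz_sub_le p q).trans h
    _ ≤ 1 / 2 * ‖horiz p‖ := by
      gcongr
      exact pow_le_of_le_one (norm_nonneg _) hle three_ne_zero
    _ = ‖horiz p‖ / 2 := by ring
  linarith

lemma abs_cotTime_polarCot_sub_le (hp : p ∈ sphere (0 : Euc 3) 1)
    (hq : q ∈ sphere (0 : Euc 3) 1) (hp₀ : horiz p ≠ 0) (hδ : δ ≤ 1 / 2)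
    (h : dist p q ≤ δ * ‖Xsph p‖) :
    |cotTime (polarCot p) - cotTime (polarCot q)| ≤ 4 * δ := by
  have hhalf : ‖horiz p‖ / 2 ≤ ‖horiz q‖ := half_norm_horiz_le hp hδ h
  rw [norm_Xsph hp] at h
  set ρ := ‖horiz p‖
  have hρ : 0 < ρ := norm_pos_iff.2 hp₀
  have hq₀ : horiz q ≠ 0 := norm_pos_iff.1 (by linarith)
  have hcot : |polarCot p - polarCot q| ≤ 2 * δ * ρ := calc
    |polarCot p - polarCot q| ≤ dist p q / (ρ * ‖horiz q‖) := abs_polarCot_sub_le hq hp₀ hq₀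
    _ ≤ δ * ρ ^ 3 / (ρ * (ρ / 2)) := by
      gcongr
      exact dist_nonneg.trans h
    _ = 2 * δ * ρ := by field_simp
  calc |cotTime (polarCot p) - cotTime (polarCot q)|
      ≤ 2 / ρ * |polarCot p - polarCot q| := by
        refine abs_cotTime_sub_le ?_ ?_
        · rw [sqrt_one_add_polarCot_sq hp hp₀, ← one_div]
          gcongr
          norm_num
        · rw [sqrt_one_add_polarCot_sq hq hq₀, ← inv_div]
          gcongr
    _ ≤ 2 / ρ * (2 * δ * ρ) := by gcongr
    _ = 4 * δ := by field_simp; ring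

end RescaledDistance

section IntegralCurve

variable {γ : ℝ → Euc 3}

lemma mem_sphere_of_isIntegralCurve_Xsph (hγ : IsIntegralCurve γ fun _ => Xsph) {r t₀ : ℝ}
    (h₀ : γ t₀ ∈ sphere (0 : Euc 3) r) (t : ℝ) : γ t ∈ sphere (0 : Euc 3) r := by
  rw [mem_sphere_zero_iff_norm] at h₀ ⊢
  rw [← h₀, norm_eq_of_isIntegralCurve_of_inner_eq_zero (fun _ => inner_Xsph_eq_zero) hγ t t₀]

lemma hasDerivAt_apply_two (hγ : IsIntegralCurve γ fun _ => Xsph) (t : ℝ) :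
    HasDerivAt (fun s => γ s 2) (-‖horiz (γ t)‖ ^ 4) t := by
  rw [← Xsph_apply_two]
  exact (EuclideanSpace.proj 2 : Euc 3 →L[ℝ] ℝ).hasFDerivAt.comp_hasDerivAt t (hγ t)

lemma isIntegralCurve_horiz (hγ : IsIntegralCurve γ fun _ => Xsph) :
    IsIntegralCurve (fun t => horiz (γ t)) fun t u => (‖horiz (γ t)‖ ^ 2 * γ t 2) • u := by
  intro t
  have h := horiz.hasFDerivAt.comp_hasDerivAt t (hγ t)
  rwa [horiz_Xsph] at h

lemma continuous_horiz_growthRate (hγ : IsIntegralCurve γ fun _ => Xsph) :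
    Continuous fun t => ‖horiz (γ t)‖ ^ 2 * γ t 2 := by
  have := hγ.continuous
  fun_prop

lemma horiz_ne_zero_of_isIntegralCurve (hγ : IsIntegralCurve γ fun _ => Xsph) {t₀ : ℝ}
    (h₀ : horiz (γ t₀) ≠ 0) (t : ℝ) : horiz (γ t) ≠ 0 :=
  ne_zero_of_isIntegralCurve_smul (continuous_horiz_growthRate hγ) (isIntegralCurve_horiz hγ) h₀ t

lemma normalize_horiz_eq_of_isIntegralCurve (hγ : IsIntegralCurve γ fun _ => Xsph) (s t : ℝ) :
    normalize (horiz (γ s)) = normalize (horiz (γ t)) :=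
  normalize_eq_of_isIntegralCurve_smul (continuous_horiz_growthRate hγ)
    (isIntegralCurve_horiz hγ) s t

lemma hasDerivAt_norm_horiz (hγ : IsIntegralCurve γ fun _ => Xsph) (t : ℝ) :
    HasDerivAt (fun s => ‖horiz (γ s)‖) (‖horiz (γ t)‖ ^ 2 * γ t 2 * ‖horiz (γ t)‖) t :=
  hasDerivAt_norm_of_isIntegralCurve_smul (continuous_horiz_growthRate hγ)
    (isIntegralCurve_horiz hγ) t

lemma hasDerivAt_polarCot (hγ : IsIntegralCurve γ fun _ => Xsph) {t : ℝ}
    (ht : γ t ∈ sphere (0 : Euc 3) 1) (ht₀ : horiz (γ t) ≠ 0) :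
    HasDerivAt (fun s => polarCot (γ s)) (-‖horiz (γ t)‖) t := by
  have hne : ‖horiz (γ t)‖ ≠ 0 := norm_ne_zero_iff.2 ht₀
  refine ((hasDerivAt_apply_two hγ t).div (hasDerivAt_norm_horiz hγ t) hne).congr_deriv ?_
  rw [div_eq_iff (pow_ne_zero 2 hne)]
  linear_combination -‖horiz (γ t)‖ ^ 3 * norm_horiz_sq_add_sq ht

lemma cotTime_polarCot_eq_sub (hγ : IsIntegralCurve γ fun _ => Xsph)
    (hγS : γ 0 ∈ sphere (0 : Euc 3) 1) (hγ₀ : horiz (γ 0) ≠ 0) (t : ℝ) :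
    cotTime (polarCot (γ t)) = cotTime (polarCot (γ 0)) - t := by
  have hd (s : ℝ) : HasDerivAt (fun s => cotTime (polarCot (γ s)) + s) 0 s := by
    have hs := mem_sphere_of_isIntegralCurve_Xsph hγ hγS s
    have hs₀ := horiz_ne_zero_of_isIntegralCurve hγ hγ₀ s
    refine (((hasDerivAt_cotTime _).comp s (hasDerivAt_polarCot hγ hs hs₀)).add
      (hasDerivAt_id s)).congr_deriv ?_
    rw [sqrt_one_add_polarCot_sq hs hs₀, mul_neg, inv_mul_cancel₀ (norm_ne_zero_iff.2 hs₀),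
      neg_add_cancel]
  have hconst := is_const_of_deriv_eq_zero (fun s => (hd s).differentiableAt)
    (fun s => (hd s).deriv) t 0
  linarith

lemma tendsto_polarCot_atBot (hγ : IsIntegralCurve γ fun _ => Xsph)
    (hγS : γ 0 ∈ sphere (0 : Euc 3) 1) (hγ₀ : horiz (γ 0) ≠ 0) :
    Tendsto (fun t => polarCot (γ t)) atTop atBot := by
  refine tendsto_atBot.2 fun w => ?_
  filter_upwards [eventually_ge_atTop (cotTime (polarCot (γ 0)) - cotTime w)] with t ht
  rw [← strictMono_cotTime.le_iff_le, cotTime_polarCot_eq_sub hγ hγS hγ₀]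
  linarith

lemma tendsto_norm_horiz_zero (hγ : IsIntegralCurve γ fun _ => Xsph)
    (hγS : γ 0 ∈ sphere (0 : Euc 3) 1) :
    Tendsto (fun t => ‖horiz (γ t)‖) atTop (𝓝 0) := by
  by_cases hγ₀ : horiz (γ 0) = 0
  · have haxis (t : ℝ) : horiz (γ t) = 0 := by
      by_contra ht
      exact horiz_ne_zero_of_isIntegralCurve hγ ht 0 hγ₀
    simp [haxis]
  · have hnorm (t : ℝ) : ‖horiz (γ t)‖ = (√(1 + polarCot (γ t) ^ 2))⁻¹ := by
      rw [sqrt_one_add_polarCot_sq (mem_sphere_of_isIntegralCurve_Xsph hγ hγS t)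
        (horiz_ne_zero_of_isIntegralCurve hγ hγ₀ t), inv_inv]
    simp only [hnorm]
    refine (tendsto_atTop_mono (fun t => ?_)
      (tendsto_abs_atBot_atTop.comp (tendsto_polarCot_atBot hγ hγS hγ₀))).inv_tendsto_atTop
    exact Real.abs_le_sqrt (by linarith)

end IntegralCurve

section Shadowing

variable {α β : ℝ → Euc 3} {δ : ℝ}

lemma normalize_horiz_eq_of_shadowing (hα : IsIntegralCurve α fun _ => Xsph)
    (hβ : IsIntegralCurve β fun _ => Xsph) (hαS : α 0 ∈ sphere (0 : Euc 3) 1) {h : ℝ → ℝ}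
    (hdist : ∀ t, dist (α t) (β (h t)) ≤ δ * ‖Xsph (α t)‖) (s t : ℝ) :
    normalize (horiz (α s)) = normalize (horiz (β t)) := by
  have hbound (r : ℝ) : ‖normalize (horiz (α s)) - normalize (horiz (β t))‖ ≤
      2 * δ * ‖horiz (α r)‖ ^ 2 := by
    rw [normalize_horiz_eq_of_isIntegralCurve hα s r,
      normalize_horiz_eq_of_isIntegralCurve hβ t (h r)]
    exact norm_normalize_horiz_sub_le (mem_sphere_of_isIntegralCurve_Xsph hα hαS r) (hdist r)
  have hlim : Tendsto (fun r => 2 * δ * ‖horiz (α r)‖ ^ 2) atTop (𝓝 0) := by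
    simpa using ((tendsto_norm_horiz_zero hα hαS).pow 2).const_mul (2 * δ)
  exact sub_eq_zero.1 (norm_le_zero_iff.1 (ge_of_tendsto' hlim hbound))

lemma exists_eq_of_normalize_horiz_eq {γ : ℝ → Euc 3} (hγ : IsIntegralCurve γ fun _ => Xsph)
    {q : Euc 3} (hγS : γ 0 ∈ sphere (0 : Euc 3) 1) (hq : q ∈ sphere (0 : Euc 3) 1)
    (hδ : δ ∈ Icc 0 (1 / 2)) (hdist : dist (γ 0) q ≤ δ * ‖Xsph (γ 0)‖)
    (hdir : normalize (horiz (γ 0)) = normalize (horiz q)) :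
    ∃ s, |s| ≤ 4 * δ ∧ γ s = q := by
  by_cases hγ₀ : horiz (γ 0) = 0
  · rw [norm_Xsph hγS, hγ₀, norm_zero, zero_pow three_ne_zero, mul_zero, dist_le_zero] at hdist
    exact ⟨0, by simpa using hδ.1, hdist⟩
  · have hq₀ : horiz q ≠ 0 := by
      rwa [ne_eq, ← normalize_eq_zero_iff, ← hdir, normalize_eq_zero_iff]
    refine ⟨cotTime (polarCot (γ 0)) - cotTime (polarCot q),
      abs_cotTime_polarCot_sub_le hγS hq hγ₀ hδ.2 hdist, ?_⟩
    refine eq_of_normalize_horiz_eq_of_polarCot_eq (mem_sphere_of_isIntegralCurve_Xsph hγ hγS _)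
      hq (horiz_ne_zero_of_isIntegralCurve hγ hγ₀ _) hq₀ ?_ (strictMono_cotTime.injective ?_)
    · rw [normalize_horiz_eq_of_isIntegralCurve hγ _ 0, hdir]
    · rw [cotTime_polarCot_eq_sub hγ hγS hγ₀, sub_sub_cancel]

end Shadowing

theorem rescalingExpansive_sphere_flow_general {φ : ℝ → Euc 3 → Euc 3}
    (hzero : ∀ p ∈ sphere (0 : Euc 3) 1, φ 0 p = p)
    (hvel : ∀ p ∈ sphere (0 : Euc 3) 1, IsIntegralCurve (fun s => φ s p) fun _ => Xsph)
    {ε : ℝ} (hε : 0 < ε) :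
    ∃ δ > 0, ∀ x ∈ sphere (0 : Euc 3) 1, ∀ y ∈ sphere (0 : Euc 3) 1, ∀ h : ℝ → ℝ,
      (∀ t, dist (φ t x) (φ (h t) y) ≤ δ * ‖Xsph (φ t x)‖) →
      ∀ t, φ (h t) y ∈ arc φ (φ t x) (-ε) ε := by
  obtain ⟨δ, hδ, hδ_half, hδε⟩ : ∃ δ > 0, δ ≤ 1 / 2 ∧ δ ≤ ε / 4 :=
    ⟨min (1 / 2) (ε / 4), by positivity, min_le_left _ _, min_le_right _ _⟩
  refine ⟨δ, hδ, fun x hx y hy h hdist t => ?_⟩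
  have hmem {p : Euc 3} (hp : p ∈ sphere (0 : Euc 3) 1) (s : ℝ) : φ s p ∈ sphere (0 : Euc 3) 1 :=
    mem_sphere_of_isIntegralCurve_Xsph (hvel p hp) (t₀ := 0) (by rwa [hzero p hp]) s
  have hdir : normalize (horiz (φ t x)) = normalize (horiz (φ (h t) y)) :=
    normalize_horiz_eq_of_shadowing (hvel x hx) (hvel y hy) (hmem hx 0) hdist t (h t)
  have hstart : φ 0 (φ t x) = φ t x := hzero _ (hmem hx t)
  obtain ⟨s, hs, hsq⟩ := exists_eq_of_normalize_horiz_eq (hvel _ (hmem hx t))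
    (hmem (hmem hx t) 0) (hmem hy (h t)) ⟨hδ.le, hδ_half⟩
    (by rw [hstart]; exact hdist t) (by rw [hstart, hdir])
  refine ⟨s, ?_, hsq⟩
  rw [uIcc_of_le (by linarith)]
  exact abs_le.1 (hs.trans (by linarith))

/-- Any flow on the unit sphere `S ⊂ ℝ³` with velocity field
`X(x,y,z) = (x² + y²)(xz, yz, −x² − y²)` is rescaling expansive on `S`. -/
theorem rescalingExpansive_sphere_flow
    (φ : ℝ → Euc 3 → Euc 3)
    (hflow : FlowOn φ (Metric.sphere (0 : Euc 3) 1))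
    (hvel : ∀ p ∈ Metric.sphere (0 : Euc 3) 1, ∀ t : ℝ,
      HasDerivAt (fun s : ℝ => φ s p) (Xsph (φ t p)) t) :
    RescalingExpansive φ Xsph (Metric.sphere (0 : Euc 3) 1) := by
  intro ε hε
  obtain ⟨δ, hδ, hexp⟩ := rescalingExpansive_sphere_flow_general hflow.2.2.1 hvel hε
  exact ⟨δ, hδ, fun x hx y hy h _ => hexp x hx y hy h⟩
end
end
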